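/- There is a Hopf algebra structure on the quantized enveloping algebra U = U_q(𝔤). Precisely: the assignments Δ(E_{α_i}) = E_{α_i}⊗1 + K_i⊗E_{α_i}, Δ(F_{α_i}) = F_{α_i}⊗K_i^{-1} + 1⊗F_{α_i}, Δ(K_i) = K_i⊗K_i (i ∈ I) extend to a well-defined ℚ(q)-algebra homomorphism Δ: U → U⊗U (i.e. they respect all defining relations of U), Δ is coassociative, and U admits a counit and antipode making (U, Δ) a Hopf algebra over ℚ(q). -/

import Mathlib

/-!
Common setup for the quantized enveloping algebra `U_q(𝔤)` of Chari–Xi,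
"Monomial bases of quantized enveloping algebras".

The base field is `𝔽 = ℚ(q)`, realized as `RatFunc ℚ` with `q = X`.  Given the Cartan matrix
`a : Fin n → Fin n → ℤ` and symmetrizing integers `d : Fin n → ℕ`, the algebra `U = U n a d`
is presented by generators `E i`, `F i`, `K i`, `K i ⁻¹` and the defining relations of
Proposition 1.1 of the paper.  `Uplus` is the subalgebra generated by the `E i`,
`Ediv i m = E i ^ m / [m]_{d i}!` are the divided powers, `𝒜 = ℤ[q,q⁻¹] ⊆ 𝔽`, and
`UA` is the `𝒜`-subalgebra generated by the divided powers.

Lusztig's braid automorphisms are abstracted as a family `T` of algebra automorphisms,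
constrained by the predicate `IsBraid` recording Lusztig's formulas on generators (which
determine `T` uniquely).  For a word `w` (a reduced expression) the PBW root vectors and PBW
monomials are `rootVec T w t m` (`= T_{i₁} ⋯ T_{i_t}(E_{i_{t+1}}^{(m)})`) and
`pbw T w [c₁, …, c_r] = E_{β₁}^{(c₁)} ⋯ E_{β_r}^{(c_r)}`, while
`mono w [c₁, …, c_r] = E_{α_{i₁}}^{(c₁)} ⋯ E_{α_{i_r}}^{(c_r)}` is a monomial in divided
powers of the Chevalley generators.

The root-lattice combinatorics is handled by `sRefl` (simple reflections acting on
coordinates w.r.t. the simple roots), `rootAt w t` (`= s_{i₁} ⋯ s_{i_t}(α_{i_{t+1}})`) and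
`applyWord`; a word is a reduced expression iff all the roots `rootAt w t` are positive
(`IsReducedWord`), and a reduced word represents the longest element `w₀` iff it moreover
sends every simple root to a negative root (`IsLongestWord`).
-/

noncomputable section
namespace ChariXi

/-- The base field `ℚ(q)`. -/
abbrev 𝔽 : Type := RatFunc ℚ

/-- The indeterminate `q`. -/
def qq : 𝔽 := RatFunc.X

/-- The quantum integer `[m]_d = (q^{dm} - q^{-dm})/(q^d - q^{-d})`. -/
def qInt (dd m : ℕ) : 𝔽 := (qq ^ (dd * m) - qq⁻¹ ^ (dd * m)) / (qq ^ dd - qq⁻¹ ^ dd)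

/-- The quantum factorial `[m]_d!`. -/
def qFact (dd : ℕ) : ℕ → 𝔽
  | 0 => 1
  | m + 1 => qInt dd (m + 1) * qFact dd m

/-- The quantum binomial coefficient `[m choose r]_d`. -/
def qBinom (dd m r : ℕ) : 𝔽 := qFact dd m / (qFact dd r * qFact dd (m - r))

/-- `𝒜 = ℤ[q,q⁻¹]` as a subring of `ℚ(q)`. -/
def 𝒜 : Subring 𝔽 := Subring.closure {qq, qq⁻¹}

/-- `ℤ[q⁻¹]` as a subring of `ℚ(q)`. -/
def 𝒜inv : Subring 𝔽 := Subring.closure {qq⁻¹}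

/-- `q⁻¹ ℤ[q⁻¹] ⊆ ℚ(q)`. -/
def qinvZqinv : Set 𝔽 := {x | ∃ y ∈ 𝒜inv, x = qq⁻¹ * y}

/-- Generators of `U_q(𝔤)`. -/
inductive Gen (n : ℕ) : Type
  | E : Fin n → Gen n
  | F : Fin n → Gen n
  | K : Fin n → Gen n
  | Kinv : Fin n → Gen n

variable (n : ℕ)

namespace Fr
/-- `E_{α_i}` in the free algebra. -/
def E (i : Fin n) : FreeAlgebra 𝔽 (Gen n) := FreeAlgebra.ι 𝔽 (Gen.E i)
/-- `F_{α_i}` in the free algebra. -/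
def F (i : Fin n) : FreeAlgebra 𝔽 (Gen n) := FreeAlgebra.ι 𝔽 (Gen.F i)
/-- `K_i` in the free algebra. -/
def K (i : Fin n) : FreeAlgebra 𝔽 (Gen n) := FreeAlgebra.ι 𝔽 (Gen.K i)
/-- `K_i⁻¹` in the free algebra. -/
def Kinv (i : Fin n) : FreeAlgebra 𝔽 (Gen n) := FreeAlgebra.ι 𝔽 (Gen.Kinv i)
end Fr

variable (a : Fin n → Fin n → ℤ) (d : Fin n → ℕ)

/-- The hypotheses on the Cartan data `(aᵢⱼ)`, `(dᵢ)` of a finite-dimensional complex simple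
Lie algebra used in the paper:  `aᵢᵢ = 2`, `aᵢⱼ ≤ 0` for `i ≠ j`, `(dᵢ aᵢⱼ)` is symmetric and
`dᵢ ∈ {1,2,3}`. -/
structure IsCartan : Prop where
  diag : ∀ i, a i i = 2
  offdiag : ∀ i j, i ≠ j → a i j ≤ 0
  symmetrizable : ∀ i j, (d i : ℤ) * a i j = (d j : ℤ) * a j i
  dmem : ∀ i, d i ∈ ({1, 2, 3} : Set ℕ)

/-- The defining relations of `U_q(𝔤)` (Proposition 1.1 of the paper). -/
inductive Rel : FreeAlgebra 𝔽 (Gen n) → FreeAlgebra 𝔽 (Gen n) → Prop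
  | KKinv (i : Fin n) : Rel (Fr.K n i * Fr.Kinv n i) 1
  | KinvK (i : Fin n) : Rel (Fr.Kinv n i * Fr.K n i) 1
  | KK (i j : Fin n) : Rel (Fr.K n i * Fr.K n j) (Fr.K n j * Fr.K n i)
  | KE (i j : Fin n) :
      Rel (Fr.K n i * Fr.E n j) ((qq ^ ((d i : ℤ) * a i j)) • (Fr.E n j * Fr.K n i))
  | KF (i j : Fin n) :
      Rel (Fr.K n i * Fr.F n j) ((qq ^ (-((d i : ℤ) * a i j))) • (Fr.F n j * Fr.K n i))
  | EF (i j : Fin n) :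
      Rel (Fr.E n i * Fr.F n j - Fr.F n j * Fr.E n i)
        (if i = j then (qq ^ (d i) - qq⁻¹ ^ (d i))⁻¹ • (Fr.K n i - Fr.Kinv n i) else 0)
  | serreE (i j : Fin n) (h : i ≠ j) :
      Rel (∑ r ∈ Finset.range ((1 - a i j).toNat + 1),
            ((-1 : 𝔽) ^ r * qBinom (d i) (1 - a i j).toNat r) •
              (Fr.E n i ^ r * Fr.E n j * Fr.E n i ^ ((1 - a i j).toNat - r))) 0
  | serreF (i j : Fin n) (h : i ≠ j) :
      Rel (∑ r ∈ Finset.range ((1 - a i j).toNat + 1),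
            ((-1 : 𝔽) ^ r * qBinom (d i) (1 - a i j).toNat r) •
              (Fr.F n i ^ r * Fr.F n j * Fr.F n i ^ ((1 - a i j).toNat - r))) 0

/-- The quantized enveloping algebra `U_q(𝔤)` over `ℚ(q)`. -/
abbrev U := RingQuot (Rel n a d)

/-- The quotient map. -/
def mk : FreeAlgebra 𝔽 (Gen n) →ₐ[𝔽] U n a d := RingQuot.mkAlgHom 𝔽 (Rel n a d)

/-- The Chevalley generator `E_{α_i}`. -/
def Eg (i : Fin n) : U n a d := mk n a d (Fr.E n i)
/-- The Chevalley generator `F_{α_i}`. -/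
def Fg (i : Fin n) : U n a d := mk n a d (Fr.F n i)
/-- The torus generator `K_i`. -/
def Kg (i : Fin n) : U n a d := mk n a d (Fr.K n i)
/-- The torus generator `K_i⁻¹`. -/
def Kinvg (i : Fin n) : U n a d := mk n a d (Fr.Kinv n i)

/-- The divided power `E_{α_i}^{(m)} = E_{α_i}^m / [m]_{dᵢ}!`. -/
def Ediv (i : Fin n) (m : ℕ) : U n a d := (qFact (d i) m)⁻¹ • Eg n a d i ^ m
/-- The divided power `F_{α_i}^{(m)}`. -/
def Fdiv (i : Fin n) (m : ℕ) : U n a d := (qFact (d i) m)⁻¹ • Fg n a d i ^ m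
/-- Integer powers `K_i^z`. -/
def Kzpow (i : Fin n) (z : ℤ) : U n a d :=
  if 0 ≤ z then Kg n a d i ^ z.toNat else Kinvg n a d i ^ (-z).toNat

/-- `U⁺`, the `ℚ(q)`-subalgebra generated by the `E_{α_i}`. -/
def Uplus : Subalgebra 𝔽 (U n a d) := Algebra.adjoin 𝔽 (Set.range (Eg n a d))

/-- The integral form `U_𝒜⁺`: the `ℤ[q,q⁻¹]`-subalgebra of `U⁺` generated by the divided
powers `E_{α_i}^{(m)}`. -/
def UA : Subalgebra 𝒜 (U n a d) :=
  Algebra.adjoin 𝒜 {x : U n a d | ∃ i m, x = Ediv n a d i m}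

/-- The homogeneous component `U⁺_ν` of `U⁺`:  the span of the monomials in the `E_{α_i}`
in which `i` occurs exactly `ν i` times (extended to integer `ν`, with `U⁺_ν = 0` if some
`ν i < 0`). -/
def wtSpace (ν : Fin n → ℤ) : Submodule 𝔽 (U n a d) :=
  Submodule.span 𝔽
    {x : U n a d | ∃ l : List (Fin n),
      x = (l.map (Eg n a d)).prod ∧ ∀ i, (l.count i : ℤ) = ν i}

/-- Lusztig's formulas for the braid group operator `Tᵢ` on generators; these determine the
automorphism `Tᵢ` uniquely. -/
structure IsBraid (T : Fin n → U n a d ≃ₐ[𝔽] U n a d) : Prop where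
  TEself : ∀ i m, T i (Ediv n a d i m)
      = ((-1 : 𝔽) ^ m * (qq ^ (m * (m - 1)))⁻¹) • (Kinvg n a d i ^ m * Fdiv n a d i m)
  TFself : ∀ i m, T i (Fdiv n a d i m)
      = ((-1 : 𝔽) ^ m * qq ^ (m * (m - 1))) • (Ediv n a d i m * Kg n a d i ^ m)
  TE : ∀ i j m, i ≠ j → T i (Ediv n a d j m)
      = ∑ s ∈ Finset.range (m * (-(a i j)).toNat + 1),
          ((-1 : 𝔽) ^ s * (qq ^ s)⁻¹) •
            (Ediv n a d i s * Ediv n a d j m * Ediv n a d i (m * (-(a i j)).toNat - s))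
  TF : ∀ i j m, i ≠ j → T i (Fdiv n a d j m)
      = ∑ s ∈ Finset.range (m * (-(a i j)).toNat + 1),
          ((-1 : 𝔽) ^ s * qq ^ s) •
            (Fdiv n a d i (m * (-(a i j)).toNat - s) * Fdiv n a d j m * Fdiv n a d i s)
  TK : ∀ i j, T i (Kg n a d j) = Kg n a d j * Kzpow n a d i (-(a i j))

variable (T : Fin n → U n a d ≃ₐ[𝔽] U n a d)

/-- The PBW root vector `E_{β_{t+1}}^{(m)} = T_{i₁} ⋯ T_{i_t} (E_{α_{i_{t+1}}}^{(m)})`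
associated to position `t` (0-based) of the word `w = [i₁, i₂, …]`. -/
def rootVec : List (Fin n) → ℕ → ℕ → U n a d
  | [], _, _ => 1
  | i :: _, 0, m => Ediv n a d i m
  | i :: w, t + 1, m => T i (rootVec w t m)

/-- The PBW monomial `E_𝐜 = E_{β₁}^{(c₁)} ⋯ E_{β_r}^{(c_r)}` for the word `w` and exponent
list `cs`. -/
def pbw : List (Fin n) → List ℕ → U n a d
  | _, [] => 1
  | [], _ => 1
  | i :: w, c :: cs => Ediv n a d i c * T i (pbw w cs)

/-- The monomial `M_𝐜 = E_{α_{j₁}}^{(c₁)} ⋯ E_{α_{j_r}}^{(c_r)}` in divided powers of the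
Chevalley generators, for the word `w = [j₁, …, j_r]`. -/
def mono : List (Fin n) → List ℕ → U n a d
  | _, [] => 1
  | [], _ => 1
  | i :: w, c :: cs => Ediv n a d i c * mono w cs

/-- `d_β` for the root `β` in position `t` of the word `w`: equals `d_{i_{t+1}}`. -/
def dAt : List (Fin n) → ℕ → ℕ
  | [], _ => 1
  | i :: _, 0 => d i
  | _ :: w, t + 1 => dAt w t

/-- The simple root `α_i` in coordinates. -/
def simpleRoot (i : Fin n) : Fin n → ℤ := fun k => if k = i then 1 else 0

/-- The simple reflection `s_i` acting on the root lattice: `s_i α_j = α_j - a_{ij} α_i`. -/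
def sRefl (i : Fin n) (v : Fin n → ℤ) : Fin n → ℤ :=
  fun k => v k - (if k = i then ∑ j, a i j * v j else 0)

/-- The positive root `β_{t+1} = s_{i₁} ⋯ s_{i_t} (α_{i_{t+1}})` associated to position `t`
(0-based) of the word `w`. -/
def rootAt : List (Fin n) → ℕ → (Fin n → ℤ)
  | [], _ => 0
  | i :: _, 0 => simpleRoot n i
  | i :: w, t + 1 => sRefl n a i (rootAt w t)

/-- The action of the word `w = [i₁, …, i_r]`, i.e. of `s_{i₁} ⋯ s_{i_r}`, on the root
lattice. -/
def applyWord : List (Fin n) → (Fin n → ℤ) → (Fin n → ℤ)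
  | [], v => v
  | i :: w, v => sRefl n a i (applyWord w v)

/-- A word is a reduced expression iff all the associated roots `β_t` are positive. -/
def IsReducedWord (w : List (Fin n)) : Prop :=
  ∀ t < w.length, ∀ i, 0 ≤ rootAt n a w t i

/-- A word is a reduced expression of the longest element `w₀` iff it is reduced and sends
every simple root to a negative root. -/
def IsLongestWord (w : List (Fin n)) : Prop :=
  IsReducedWord n a w ∧ ∀ i j, applyWord n a w (simpleRoot n i) j ≤ 0

/-- Strict lexicographic order on `ℕ^r`, with `(1,0,…,0) > (0,1,…,0) > ⋯ > (0,…,0,1)`: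
`c < e` iff at the first index where they differ, `e` is larger. -/
def lexLt {r : ℕ} (c e : Fin r → ℕ) : Prop :=
  ∃ t : Fin r, (∀ s : Fin r, s < t → c s = e s) ∧ c t < e t

/-- Reflexive lexicographic order on `ℕ^r`. -/
def lexLe {r : ℕ} (c e : Fin r → ℕ) : Prop := c = e ∨ lexLt c e

end ChariXi

/-!
STATEMENT 0 (Proposition 1.1): `U = U_q(𝔤)` is a Hopf algebra over `ℚ(q)`: the assignments
`Δ(E_i) = E_i ⊗ 1 + K_i ⊗ E_i`, `Δ(F_i) = F_i ⊗ K_i⁻¹ + 1 ⊗ F_i`, `Δ(K_i) = K_i ⊗ K_i`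
extend to a well-defined `ℚ(q)`-algebra homomorphism `Δ : U → U ⊗ U`, `Δ` is coassociative,
and `U` admits a counit `ε` and an antipode `S` making `(U, Δ, ε, S)` a Hopf algebra.
-/

open ChariXi
open scoped TensorProduct

/-!
An assignment on the generators extends to an algebra homomorphism out of `U` as soon as the
defining relations hold in the target, so `Δ`, `ε` and `S` are obtained by exhibiting solutions of
the relations in `U ⊗ U`, in `ℚ(q)` and in the opposite algebra of `U`. Only the quantum Serre
relations are hard to check. By the quantum binomial theorem the Serre element of degree `N` is an
iterated `q`-commutator,
`∑ (-1)^r [N choose r] X^r Y X^(N-r) = (R - w^(1-N) L) ⋯ (R - w^(N-3) L) (R - w^(N-1) L) Y`,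
where `L` and `R` are left and right multiplication by `X` and `w = q^d`. If `B` satisfies
`B X = w² X B` and `B Y = w^(1-N) Y B`, each factor kills the contribution of `B`, so `X + B` and
`X` give the same element. This separates the Serre element of `Δ(E_i)` and `Δ(E_j)` into one
term from each tensor factor; the same factorization handles the twists by `K_i` in the antipode.
-/

namespace ChariXi

open Finset MulOpposite

section QCommute

variable {R A B : Type*} [CommSemiring R] [Ring A] [Algebra R A] [Ring B] [Algebra R B]

/-- The elements `x` and `y` commute up to the scalar `c`, which is picked up when `x` moves to the
right past `y`. -/
def QCommute (c : R) (x y : A) : Prop := x * y = c • (y * x)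

namespace QCommute

variable {c c' : R} {x y z : A}

theorem of_commute (h : Commute x y) : QCommute (1 : R) x y := by
  rw [QCommute, one_smul, h.eq]

theorem mul_left (hx : QCommute c x z) (hy : QCommute c' y z) : QCommute (c * c') (x * y) z := by
  rw [QCommute, mul_assoc, hy, mul_smul_comm, ← mul_assoc, hx, smul_mul_assoc, smul_smul, mul_comm,
    mul_assoc]

theorem mul_right (hy : QCommute c x y) (hz : QCommute c' x z) : QCommute (c * c') x (y * z) := by
  rw [QCommute, ← mul_assoc, hy, smul_mul_assoc, mul_assoc, hz, mul_smul_comm, smul_smul, mul_assoc]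

theorem pow_right (h : QCommute c x y) (m : ℕ) : QCommute (c ^ m) x (y ^ m) := by
  induction m with
  | zero => simpa only [pow_zero] using of_commute (Commute.one_right x)
  | succ m ih => simpa only [pow_succ] using ih.mul_right h

theorem add_right (hy : QCommute c x y) (hz : QCommute c x z) : QCommute c x (y + z) := by
  rw [QCommute, mul_add, add_mul, hy, hz, smul_add]

theorem sub_left (hx : QCommute c x z) (hy : QCommute c y z) : QCommute c (x - y) z := by
  rw [QCommute, sub_mul, mul_sub, hx, hy, smul_sub]

theorem sub_right (hy : QCommute c x y) (hz : QCommute c x z) : QCommute c x (y - z) := by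
  rw [QCommute, mul_sub, sub_mul, hy, hz, smul_sub]

theorem neg_left (h : QCommute c x y) : QCommute c (-x) y := by
  rw [QCommute, neg_mul, mul_neg, h, smul_neg]

theorem neg_right (h : QCommute c x y) : QCommute c x (-y) := by
  rw [QCommute, mul_neg, neg_mul, h, smul_neg]

theorem smul_left (s : R) (h : QCommute c x y) : QCommute c (s • x) y := by
  rw [QCommute, smul_mul_assoc, mul_smul_comm, h, smul_comm]

theorem smul_right (s : R) (h : QCommute c x y) : QCommute c x (s • y) := by
  rw [QCommute, smul_mul_assoc, mul_smul_comm, h, smul_comm]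

theorem op (h : QCommute c x y) : QCommute c (op y) (op x) := by
  rw [QCommute, ← op_mul, ← op_mul, h, op_smul]

theorem tmul {x' y' : B} (h : QCommute c x y) (h' : QCommute c' x' y') :
    QCommute (c * c') (x ⊗ₜ[R] x') (y ⊗ₜ[R] y') := by
  rw [QCommute, Algebra.TensorProduct.tmul_mul_tmul, h, h', TensorProduct.smul_tmul_smul,
    Algebra.TensorProduct.tmul_mul_tmul]

theorem units_inv_right {u : Aˣ} (h : QCommute c (u : A) x) : QCommute c x ((u⁻¹ : Aˣ) : A) := by
  rw [QCommute, Units.mul_inv_eq_iff_eq_mul, smul_mul_assoc, mul_assoc, ← mul_smul_comm, ← h,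
    Units.inv_mul_cancel_left]

theorem symm {F : Type*} [Field F] [Algebra F A] {c : F} (hc : c ≠ 0) (h : QCommute c x y) :
    QCommute c⁻¹ y x := by
  rw [QCommute, h, inv_smul_smul₀ hc]

end QCommute

/-- The iterated `q`-commutator `(R - c₍ₖ₋₁₎ L) ⋯ (R - c₀ L) y`, where `L` and `R` are left and
right multiplication by `x`. -/
def iterQComm (c : ℕ → R) (x y : A) : ℕ → A
  | 0 => y
  | k + 1 => iterQComm c x y k * x - c k • (x * iterQComm c x y k)

variable {b x y : A} {t u : R}

theorem QCommute.iterQComm_right (hx : QCommute u b x) (hy : QCommute t b y) (c : ℕ → R) (k : ℕ) :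
    QCommute (t * u ^ k) b (iterQComm c x y k) := by
  induction k with
  | zero => simpa only [iterQComm, pow_zero, mul_one] using hy
  | succ k ih =>
    have hr := ih.mul_right hx
    have hl := hx.mul_right ih
    rw [mul_comm u] at hl
    rw [pow_succ, ← mul_assoc]
    exact hr.sub_right (hl.smul_right _)

theorem QCommute.iterQComm_left (hx : QCommute u x b) (hy : QCommute t y b) (c : ℕ → R) (k : ℕ) :
    QCommute (t * u ^ k) (iterQComm c x y k) b := by
  induction k with
  | zero => simpa only [iterQComm, pow_zero, mul_one] using hy
  | succ k ih =>
    have hr := ih.mul_left hx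
    have hl := hx.mul_left ih
    rw [mul_comm u] at hl
    rw [pow_succ, ← mul_assoc]
    exact hr.sub_left (hl.smul_left _)

theorem iterQComm_add_left {c : ℕ → R} (hx : QCommute u b x) (hy : QCommute t b y)
    (hc : ∀ k, c k * (t * u ^ k) = 1) (k : ℕ) :
    iterQComm c (x + b) y k = iterQComm c x y k := by
  induction k with
  | zero => rfl
  | succ k ih =>
    have hb : c k • (b * iterQComm c x y k) = iterQComm c x y k * b := by
      rw [hx.iterQComm_right hy c k, smul_smul, hc, one_smul]
    rw [iterQComm, ih, mul_add, add_mul, smul_add, hb, add_sub_add_right_eq_sub, iterQComm]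

theorem iterQComm_twist {g h : A} (hxg : QCommute u x g) (hxh : QCommute t x h)
    (hyg : QCommute t y g) (hgh : Commute g h) (c : ℕ → R) (k : ℕ) :
    iterQComm c (g * x) (h * y) k
      = (∏ l ∈ range k, t * u ^ l) • (g ^ k * h * iterQComm c x y k) := by
  induction k with
  | zero => simp only [iterQComm, range_zero, prod_empty, pow_zero, one_mul, one_smul]
  | succ k ih =>
    set Z := iterQComm c x y k
    have hZg : Z * g = (t * u ^ k) • (g * Z) := hxg.iterQComm_left hyg c k
    have hxgh : x * (g ^ k * h) = (u ^ k * t) • (g ^ k * h * x) := (hxg.pow_right k).mul_right hxh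
    have hright : g ^ k * h * Z * (g * x) = (t * u ^ k) • (g ^ (k + 1) * h * (Z * x)) := by
      rw [mul_assoc, ← mul_assoc Z, hZg, smul_mul_assoc, mul_smul_comm, mul_assoc g,
        ← mul_assoc _ g, mul_assoc _ h, ← hgh.eq, ← mul_assoc _ g, ← pow_succ]
    have hleft : g * x * (g ^ k * h * Z) = (t * u ^ k) • (g ^ (k + 1) * h * (x * Z)) := by
      rw [mul_assoc, ← mul_assoc x, hxgh, smul_mul_assoc, mul_smul_comm, mul_comm t, pow_succ']
      simp only [mul_assoc]
    rw [iterQComm, ih, smul_mul_assoc, mul_smul_comm, hright, hleft, prod_range_succ, iterQComm,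
      mul_sub, smul_sub, smul_smul, mul_smul_comm, smul_smul, smul_smul, smul_smul]
    congr 2
    ring

end QCommute

theorem tmul_commutator {R A B : Type*} [CommRing R] [Ring A] [Algebra R A] [Ring B] [Algebra R B]
    {e f k : A} {e' f' l : B}
    (h : (k ⊗ₜ[R] e') * (f ⊗ₜ l) = (f ⊗ₜ l) * (k ⊗ₜ e')) :
    (e ⊗ₜ[R] 1 + k ⊗ₜ[R] e') * (f ⊗ₜ[R] l + 1 ⊗ₜ[R] f')
        - (f ⊗ₜ[R] l + 1 ⊗ₜ[R] f') * (e ⊗ₜ[R] 1 + k ⊗ₜ[R] e')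
      = (e * f - f * e) ⊗ₜ[R] l + k ⊗ₜ[R] (e' * f' - f' * e') := by
  rw [mul_add, add_mul, add_mul, add_mul, mul_add, mul_add, h]
  simp only [Algebra.TensorProduct.tmul_mul_tmul, mul_one, one_mul, TensorProduct.sub_tmul,
    TensorProduct.tmul_sub]
  abel

section QuantumIntegers

theorem qq_ne_zero : qq ≠ 0 := RatFunc.X_ne_zero

theorem qq_pow_ne_one {k : ℕ} (hk : k ≠ 0) : qq ^ k ≠ 1 := by
  intro h
  have hX : (Polynomial.X ^ k : Polynomial ℚ) = 1 :=
    RatFunc.algebraMap_injective ℚ (by simpa [qq, RatFunc.algebraMap_X] using h)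
  exact hk (by simpa using congrArg Polynomial.natDegree hX)

theorem qq_pow_sub_inv_pow_ne_zero {k : ℕ} (hk : k ≠ 0) : qq ^ k - qq⁻¹ ^ k ≠ 0 := by
  intro h
  apply qq_pow_ne_one (k := k + k) (by lia)
  calc qq ^ (k + k) = qq⁻¹ ^ k * qq ^ k := by rw [pow_add, ← sub_eq_zero.1 h]
    _ = 1 := by rw [← mul_pow, inv_mul_cancel₀ qq_ne_zero, one_pow]

theorem qInt_zero (dd : ℕ) : qInt dd 0 = 0 := by
  simp only [qInt, mul_zero, pow_zero, sub_self, zero_div]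

theorem qInt_ne_zero {dd m : ℕ} (hd : dd ≠ 0) (hm : m ≠ 0) : qInt dd m ≠ 0 :=
  div_ne_zero (qq_pow_sub_inv_pow_ne_zero (mul_ne_zero hd hm)) (qq_pow_sub_inv_pow_ne_zero hd)

theorem qInt_add (dd r m : ℕ) :
    qInt dd (r + m) = (qq ^ dd) ^ r * qInt dd m + ((qq ^ dd) ^ m)⁻¹ * qInt dd r := by
  have hq := qq_ne_zero
  simp only [qInt, mul_div_assoc', ← add_div]
  congr 1
  simp only [mul_add, pow_add, inv_pow, ← pow_mul, mul_sub]
  field_simp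
  ring

theorem qInt_div_qFact {dd : ℕ} (hd : dd ≠ 0) (m : ℕ) :
    qInt dd (m + 1) / qFact dd (m + 1) = 1 / qFact dd m := by
  rw [qFact, div_mul_cancel_left₀ (qInt_ne_zero hd m.succ_ne_zero), one_div]

end QuantumIntegers

section Serre

variable {A B : Type*} [Ring A] [Algebra 𝔽 A] [Ring B] [Algebra 𝔽 B] {dd N : ℕ}

/-- The element whose vanishing is the quantum Serre relation of degree `N` for `X` and `Y`. -/
def serre (dd N : ℕ) (X Y : A) : A :=
  ∑ r ∈ range (N + 1), ((-1 : 𝔽) ^ r * qBinom dd N r) • (X ^ r * Y * X ^ (N - r))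

theorem map_serre (φ : A →ₐ[𝔽] B) (dd N : ℕ) (X Y : A) :
    φ (serre dd N X Y) = serre dd N (φ X) (φ Y) := by
  simp only [serre, map_sum, map_smul, map_mul, map_pow]

theorem serre_add_right (dd N : ℕ) (X Y Z : A) :
    serre dd N X (Y + Z) = serre dd N X Y + serre dd N X Z := by
  simp only [serre, mul_add, add_mul, smul_add, sum_add_distrib]

/-- The sum `∑ (-s)^r X^(r) Y X^(m)` over `r + m = N`, with divided powers `X^(r) = X^r / [r]!`.
At `s = 1` it is the Serre element divided by `[N]!`; the recursion in `N` rescales `s`. -/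
def dividedSerre (dd : ℕ) (s : 𝔽) (X Y : A) (N : ℕ) : A :=
  ∑ p ∈ antidiagonal N,
    ((-s) ^ p.1 / (qFact dd p.1 * qFact dd p.2)) • (X ^ p.1 * Y * X ^ p.2)

theorem serre_eq_qFact_smul (dd N : ℕ) (X Y : A) :
    serre dd N X Y = qFact dd N • dividedSerre dd 1 X Y N := by
  rw [serre, dividedSerre, Nat.sum_antidiagonal_eq_sum_range_succ_mk, smul_sum]
  refine sum_congr rfl fun r _ => ?_
  rw [smul_smul, qBinom, mul_div_assoc', mul_div_assoc', mul_comm]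

theorem qInt_smul_dividedSerre (hd : dd ≠ 0) (s : 𝔽) (X Y : A) (N : ℕ) :
    qInt dd (N + 1) • dividedSerre dd s X Y (N + 1)
      = dividedSerre dd (s * qq ^ dd) X Y N * X
        - (s * ((qq ^ dd) ^ N)⁻¹) • (X * dividedSerre dd (s * qq ^ dd) X Y N) := by
  set w := qq ^ dd with hw
  have hw0 : w ≠ 0 := pow_ne_zero _ qq_ne_zero
  have hright : ∑ p ∈ antidiagonal (N + 1),
      ((-(s * w)) ^ p.1 * (qInt dd p.2 / (qFact dd p.1 * qFact dd p.2))) • (X ^ p.1 * Y * X ^ p.2)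
        = dividedSerre dd (s * w) X Y N * X := by
    rw [Nat.sum_antidiagonal_succ', qInt_zero, zero_div, mul_zero, zero_smul, zero_add,
      dividedSerre, sum_mul]
    refine sum_congr rfl fun p _ => ?_
    rw [mul_comm (qFact dd _), ← div_div, qInt_div_qFact hd, div_div, mul_one_div,
      mul_comm (qFact dd _), smul_mul_assoc, mul_assoc _ _ X, ← pow_succ]
  have hleft : ∑ p ∈ antidiagonal (N + 1),
      ((-s) ^ p.1 * (w ^ p.2)⁻¹ * (qInt dd p.1 / (qFact dd p.1 * qFact dd p.2))) •
        (X ^ p.1 * Y * X ^ p.2)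
        = -((s * (w ^ N)⁻¹) • (X * dividedSerre dd (s * w) X Y N)) := by
    rw [Nat.sum_antidiagonal_succ, qInt_zero, zero_div, mul_zero, zero_smul, zero_add,
      dividedSerre, mul_sum, smul_sum, ← sum_neg_distrib]
    refine sum_congr rfl fun p hp => ?_
    have hscalar : (-s) ^ (p.1 + 1) * (w ^ p.2)⁻¹ = -(s * (w ^ N)⁻¹ * (-(s * w)) ^ p.1) := by
      rw [← mem_antidiagonal.1 hp, ← neg_mul s w, mul_pow, pow_add w]
      field_simp
      ring
    rw [← div_div, qInt_div_qFact hd, div_div, mul_one_div, hscalar, mul_smul_comm, smul_smul,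
      ← neg_smul, pow_succ' X, mul_assoc X, mul_assoc X, neg_div, mul_div_assoc']
  rw [sub_eq_add_neg, ← hright, ← hleft, ← sum_add_distrib, dividedSerre, smul_sum]
  refine sum_congr rfl fun p hp => ?_
  rw [smul_smul, ← add_smul, ← mem_antidiagonal.1 hp, qInt_add, ← hw, ← neg_mul s w, mul_pow]
  congr 1
  ring

theorem qFact_smul_dividedSerre (hd : dd ≠ 0) (s : 𝔽) (X Y : A) (N : ℕ) :
    qFact dd N • dividedSerre dd s X Y N
      = iterQComm (fun k => s * (qq ^ dd) ^ ((N : ℤ) - 1 - 2 * k)) X Y N := by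
  set w := qq ^ dd with hw
  have hw0 : w ≠ 0 := pow_ne_zero _ qq_ne_zero
  induction N generalizing s with
  | zero => simp [qFact, dividedSerre, iterQComm]
  | succ N ih =>
    have hrescale (k : ℕ) : s * w ^ (((N + 1 : ℕ) : ℤ) - 1 - 2 * k)
        = s * w * w ^ ((N : ℤ) - 1 - 2 * k) := by
      rw [mul_assoc, ← zpow_one_add₀ hw0]
      congr 2
      push_cast
      ring
    have hlast : s * w * w ^ ((N : ℤ) - 1 - 2 * N) = s * (w ^ N)⁻¹ := by
      rw [mul_assoc, ← zpow_one_add₀ hw0, ← zpow_natCast w N, ← zpow_neg]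
      congr 2
      ring
    rw [qFact, mul_comm, ← smul_smul, qInt_smul_dividedSerre hd, ← hw, smul_sub,
      ← smul_mul_assoc, smul_comm, ← mul_smul_comm, ih]
    simp only [hrescale, iterQComm, hlast]

theorem serre_eq_iterQComm (hd : dd ≠ 0) (N : ℕ) (X Y : A) :
    serre dd N X Y = iterQComm (fun k => (qq ^ dd) ^ ((N : ℤ) - 1 - 2 * k)) X Y N := by
  simpa only [one_mul] using
    (serre_eq_qFact_smul dd N X Y).trans (qFact_smul_dividedSerre hd 1 X Y N)

theorem serre_op (dd N : ℕ) (X Y : A) :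
    serre dd N (op X) (op Y) = (-1 : 𝔽) ^ N • op (serre dd N X Y) := by
  rw [serre_eq_qFact_smul, serre_eq_qFact_smul, op_smul, smul_comm]
  congr 1
  rw [dividedSerre, dividedSerre, op_sum, smul_sum]
  refine (Nat.sum_antidiagonal_swap (n := N)).symm.trans (sum_congr rfl fun p hp => ?_)
  have hsign : (-1 : 𝔽) ^ N * (-1) ^ p.1 = (-1) ^ p.2 := by
    rw [← mem_antidiagonal.1 hp, pow_add, mul_right_comm, ← pow_add, Even.neg_one_pow ⟨_, rfl⟩,
      one_mul]
  rw [op_smul, smul_smul, mul_div_assoc', hsign, mul_comm (qFact dd p.1)]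
  simp only [Prod.fst_swap, Prod.snd_swap, op_mul, op_pow, mul_assoc]

theorem serre_op_eq_zero {X Y : A} (h : serre dd N X Y = 0) : serre dd N (op X) (op Y) = 0 := by
  rw [serre_op, h, op_zero, smul_zero]

theorem serre_add_left (hd : dd ≠ 0) {X B Y : A} (hX : QCommute ((qq ^ dd) ^ 2) B X)
    (hY : QCommute ((qq ^ dd) ^ (1 - (N : ℤ))) B Y) : serre dd N (X + B) Y = serre dd N X Y := by
  have hw : qq ^ dd ≠ 0 := pow_ne_zero _ qq_ne_zero
  rw [serre_eq_iterQComm hd, serre_eq_iterQComm hd]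
  refine iterQComm_add_left hX hY (fun k => ?_) N
  rw [← pow_mul, ← zpow_natCast (qq ^ dd) (2 * k), ← zpow_add₀ hw, ← zpow_add₀ hw]
  convert zpow_zero _ using 2
  push_cast
  ring

-- In the opposite algebra `X` and `B` exchange their roles.
theorem serre_add_left' (hd : dd ≠ 0) {X B Y : A} (hX : QCommute ((qq ^ dd) ^ 2) B X)
    (hY : QCommute ((qq ^ dd) ^ (1 - (N : ℤ))) Y X) : serre dd N (X + B) Y = serre dd N B Y := by
  have h := serre_add_left hd hX.op hY.op
  rw [← op_add, add_comm, serre_op, serre_op] at h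
  exact op_injective (smul_right_injective _ (pow_ne_zero N (neg_ne_zero.2 one_ne_zero)) h)

theorem serre_add_add_eq_zero (hd : dd ≠ 0) {X B Y Z : A} (hBX : QCommute ((qq ^ dd) ^ 2) B X)
    (hBY : QCommute ((qq ^ dd) ^ (1 - (N : ℤ))) B Y)
    (hZX : QCommute ((qq ^ dd) ^ (1 - (N : ℤ))) Z X)
    (hXY : serre dd N X Y = 0) (hBZ : serre dd N B Z = 0) : serre dd N (X + B) (Y + Z) = 0 := by
  rw [serre_add_right, serre_add_left hd hBX hBY, serre_add_left' hd hBX hZX, hXY, hBZ, add_zero]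

theorem serre_twist_eq_zero (hd : dd ≠ 0) {g h X Y : A} {t u : 𝔽} (hXg : QCommute u X g)
    (hXh : QCommute t X h) (hYg : QCommute t Y g) (hgh : Commute g h)
    (hXY : serre dd N X Y = 0) : serre dd N (g * X) (h * Y) = 0 := by
  rw [serre_eq_iterQComm hd] at hXY ⊢
  rw [iterQComm_twist hXg hXh hYg hgh, hXY, mul_zero, smul_zero]

theorem serre_tmul_right_eq_zero (hd : dd ≠ 0) {g h : A} (hgh : Commute g h) {X Y : B}
    (hXY : serre dd N X Y = 0) : serre dd N (g ⊗ₜ[𝔽] X) (h ⊗ₜ[𝔽] Y) = 0 := by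
  have hcomm (x : A) (y : B) : QCommute (1 : 𝔽) ((1 : A) ⊗ₜ[𝔽] y) (x ⊗ₜ[𝔽] (1 : B)) :=
    .of_commute ((Commute.one_left x).tmul (Commute.one_right y))
  have hincl : serre dd N ((1 : A) ⊗ₜ[𝔽] X) (1 ⊗ₜ Y) = 0 := by
    simpa only [hXY, map_zero, Algebra.TensorProduct.includeRight_apply] using
      (map_serre (Algebra.TensorProduct.includeRight : B →ₐ[𝔽] A ⊗[𝔽] B) dd N X Y).symm
  simpa only [Algebra.TensorProduct.tmul_mul_tmul, mul_one, one_mul] using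
    serre_twist_eq_zero hd (hcomm g X) (hcomm h X) (hcomm g Y)
      (hgh.tmul (Commute.one_left 1)) hincl

theorem serre_tmul_left_eq_zero (hd : dd ≠ 0) {g h : B} (hgh : Commute g h) {X Y : A}
    (hXY : serre dd N X Y = 0) : serre dd N (X ⊗ₜ[𝔽] g) (Y ⊗ₜ[𝔽] h) = 0 := by
  let swap : B ⊗[𝔽] A →ₐ[𝔽] A ⊗[𝔽] B := (Algebra.TensorProduct.comm 𝔽 B A).toAlgHom
  have hswap (b : B) (x : A) : swap (b ⊗ₜ x) = x ⊗ₜ b := Algebra.TensorProduct.comm_tmul ..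
  rw [← hswap, ← hswap, ← map_serre, serre_tmul_right_eq_zero hd hgh hXY, map_zero]

end Serre

section CartanData

variable {n : ℕ}

/-- Symmetrizable generalized Cartan matrices `a`, with nonzero symmetrizing integers `d`. -/
structure IsSymmetrizableCartan (a : Fin n → Fin n → ℤ) (d : Fin n → ℕ) : Prop where
  diag : ∀ i, a i i = 2
  offdiag : ∀ i j, i ≠ j → a i j ≤ 0
  symmetrizable : ∀ i j, (d i : ℤ) * a i j = (d j : ℤ) * a j i
  d_ne_zero : ∀ i, d i ≠ 0

variable {a : Fin n → Fin n → ℤ} {d : Fin n → ℕ}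

theorem IsCartan.isSymmetrizableCartan (hC : IsCartan n a d) : IsSymmetrizableCartan a d where
  diag := hC.diag
  offdiag := hC.offdiag
  symmetrizable := hC.symmetrizable
  d_ne_zero i hi := by simpa [hi] using hC.dmem i

/-- The scalar `q^(d_i a_ij)` by which `K_i` acts on `E_j`. -/
def qPairing (a : Fin n → Fin n → ℤ) (d : Fin n → ℕ) (i j : Fin n) : 𝔽 :=
  qq ^ ((d i : ℤ) * a i j)

theorem qPairing_ne_zero (i j : Fin n) : qPairing a d i j ≠ 0 := zpow_ne_zero _ qq_ne_zero

namespace IsSymmetrizableCartan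

theorem qPairing_comm (hC : IsSymmetrizableCartan a d) (i j : Fin n) :
    qPairing a d i j = qPairing a d j i := by
  rw [qPairing, hC.symmetrizable, qPairing]

theorem qPairing_self (hC : IsSymmetrizableCartan a d) (i : Fin n) :
    qPairing a d i i = (qq ^ d i) ^ 2 := by
  rw [qPairing, hC.diag, zpow_mul, zpow_natCast, zpow_ofNat]

theorem qPairing_of_ne (hC : IsSymmetrizableCartan a d) {i j : Fin n} (hij : i ≠ j) :
    qPairing a d i j = (qq ^ d i) ^ (1 - ((1 - a i j).toNat : ℤ)) := by
  have := hC.offdiag i j hij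
  rw [qPairing, zpow_mul, zpow_natCast]
  congr 1
  lia

end IsSymmetrizableCartan

end CartanData

section ChevalleyFamily

variable {n : ℕ}

/-- Elements of an algebra `A` that satisfy the defining relations of `U_q(𝔤)`. They are the same
thing as an algebra homomorphism from `U_q(𝔤)` to `A`; invertibility of the `k i` is part of the
data. -/
structure ChevalleyFamily (a : Fin n → Fin n → ℤ) (d : Fin n → ℕ) (A : Type*) [Ring A]
    [Algebra 𝔽 A] where
  e : Fin n → A
  f : Fin n → A
  k : Fin n → Aˣ
  k_comm : ∀ i j, Commute (k i) (k j)
  k_e : ∀ i j, QCommute (qPairing a d i j) (k i : A) (e j)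
  k_f : ∀ i j, QCommute (qPairing a d i j)⁻¹ (k i : A) (f j)
  e_f : ∀ i j, e i * f j - f j * e i
    = if i = j then (qq ^ d i - qq⁻¹ ^ d i)⁻¹ • ((k i : A) - ((k i)⁻¹ : Aˣ)) else 0
  serre_e : ∀ i j, i ≠ j → serre (d i) (1 - a i j).toNat (e i) (e j) = 0
  serre_f : ∀ i j, i ≠ j → serre (d i) (1 - a i j).toNat (f i) (f j) = 0

variable {a : Fin n → Fin n → ℤ} {d : Fin n → ℕ}
variable {A B : Type*} [Ring A] [Algebra 𝔽 A] [Ring B] [Algebra 𝔽 B]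

namespace ChevalleyFamily

section Relations

variable (D : ChevalleyFamily a d A)

/-- The inverse of `k i`, as an element of the algebra. -/
abbrev kInv (i : Fin n) : A := ((D.k i)⁻¹ : Aˣ)

theorem e_kInv (i j : Fin n) : QCommute (qPairing a d i j) (D.e j) (D.kInv i) :=
  (D.k_e i j).units_inv_right

theorem f_kInv (i j : Fin n) : QCommute (qPairing a d i j)⁻¹ (D.f j) (D.kInv i) :=
  (D.k_f i j).units_inv_right

theorem kInv_f (i j : Fin n) : QCommute (qPairing a d i j) (D.kInv i) (D.f j) := by
  simpa only [inv_inv] using (D.f_kInv i j).symm (inv_ne_zero (qPairing_ne_zero i j))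

theorem k_kInv_comm (i j : Fin n) : Commute (D.k i : A) (D.kInv j) :=
  (D.k_comm i j).inv_right.units_val

theorem kInv_comm (i j : Fin n) : Commute (D.kInv i) (D.kInv j) :=
  (D.k_comm i j).inv_inv.units_val

theorem neg_f_k_mul_kInv_add_f (i : Fin n) : -(D.f i * D.k i) * D.kInv i + D.f i = 0 := by
  rw [neg_mul, Units.mul_inv_cancel_right, neg_add_cancel]

theorem e_add_k_mul_neg_kInv_e (i : Fin n) : D.e i + D.k i * -(D.kInv i * D.e i) = 0 := by
  rw [mul_neg, Units.mul_inv_cancel_left, add_neg_cancel]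

end Relations

section Tensor

variable (D : ChevalleyFamily a d A) (D' : ChevalleyFamily a d B)

theorem k_tmul_e (i j : Fin n) : QCommute (qPairing a d i j)
    ((D.k i : A) ⊗ₜ[𝔽] D'.e i) (D.e j ⊗ₜ[𝔽] (1 : B)) := by
  simpa only [mul_one] using (D.k_e i j).tmul (.of_commute (Commute.one_right (D'.e i)))

theorem f_tmul_kInv (i j : Fin n) : QCommute (qPairing a d i j)
    (D.f i ⊗ₜ[𝔽] D'.kInv i) ((1 : A) ⊗ₜ[𝔽] D'.f j) := by
  simpa only [one_mul] using (QCommute.of_commute (Commute.one_right (D.f i))).tmul (D'.kInv_f i j)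

theorem k_tmul_e_comm (hC : IsSymmetrizableCartan a d) (i j : Fin n) :
    Commute ((D.k i : A) ⊗ₜ[𝔽] D'.e i) (D.f j ⊗ₜ[𝔽] D'.kInv j) := by
  have h := (D.k_f i j).tmul (D'.e_kInv j i)
  rwa [hC.qPairing_comm j i, inv_mul_cancel₀ (qPairing_ne_zero i j), QCommute, one_smul] at h

theorem tensor_serre_e (hC : IsSymmetrizableCartan a d) {i j : Fin n} (hij : i ≠ j) :
    serre (d i) (1 - a i j).toNat (D.e i ⊗ₜ[𝔽] (1 : B) + (D.k i : A) ⊗ₜ[𝔽] D'.e i)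
      (D.e j ⊗ₜ[𝔽] (1 : B) + (D.k j : A) ⊗ₜ[𝔽] D'.e j) = 0 := by
  have hd := hC.d_ne_zero i
  refine serre_add_add_eq_zero hd ?_ ?_ ?_
    (serre_tmul_left_eq_zero hd (Commute.one_left 1) (D.serre_e i j hij))
    (serre_tmul_right_eq_zero hd (D.k_comm i j).units_val (D'.serre_e i j hij))
  · exact hC.qPairing_self i ▸ k_tmul_e D D' i i
  · exact hC.qPairing_of_ne hij ▸ k_tmul_e D D' i j
  · exact hC.qPairing_of_ne hij ▸ hC.qPairing_comm i j ▸ k_tmul_e D D' j i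

theorem tensor_serre_f (hC : IsSymmetrizableCartan a d) {i j : Fin n} (hij : i ≠ j) :
    serre (d i) (1 - a i j).toNat (D.f i ⊗ₜ[𝔽] D'.kInv i + (1 : A) ⊗ₜ[𝔽] D'.f i)
      (D.f j ⊗ₜ[𝔽] D'.kInv j + (1 : A) ⊗ₜ[𝔽] D'.f j) = 0 := by
  have hd := hC.d_ne_zero i
  rw [add_comm (D.f i ⊗ₜ _), add_comm (D.f j ⊗ₜ _)]
  refine serre_add_add_eq_zero hd ?_ ?_ ?_
    (serre_tmul_right_eq_zero hd (Commute.one_left 1) (D'.serre_f i j hij))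
    (serre_tmul_left_eq_zero hd (D'.kInv_comm i j) (D.serre_f i j hij))
  · exact hC.qPairing_self i ▸ f_tmul_kInv D D' i i
  · exact hC.qPairing_of_ne hij ▸ f_tmul_kInv D D' i j
  · exact hC.qPairing_of_ne hij ▸ hC.qPairing_comm i j ▸ f_tmul_kInv D D' j i

/-- The tensor product of two families, given by the formulas for the comultiplication. -/
def tensor (hC : IsSymmetrizableCartan a d) : ChevalleyFamily a d (A ⊗[𝔽] B) where
  e i := D.e i ⊗ₜ 1 + (D.k i : A) ⊗ₜ D'.e i
  f i := D.f i ⊗ₜ D'.kInv i + 1 ⊗ₜ D'.f i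
  k i :=
    { val := (D.k i : A) ⊗ₜ (D'.k i : B)
      inv := D.kInv i ⊗ₜ D'.kInv i
      val_inv := by simp [Algebra.TensorProduct.one_def]
      inv_val := by simp [Algebra.TensorProduct.one_def] }
  k_comm i j := Units.ext ((D.k_comm i j).units_val.tmul (D'.k_comm i j).units_val)
  k_e i j := by
    have hl := (D.k_e i j).tmul (.of_commute (Commute.one_right (D'.k i : B)))
    have hr := (QCommute.of_commute (D.k_comm i j).units_val).tmul (D'.k_e i j)
    rw [mul_one] at hl
    rw [one_mul] at hr
    exact hl.add_right hr
  k_f i j := by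
    have hl := (D.k_f i j).tmul (.of_commute (D'.k_kInv_comm i j))
    have hr := (QCommute.of_commute (Commute.one_right (D.k i : A))).tmul (D'.k_f i j)
    rw [mul_one] at hl
    rw [one_mul] at hr
    exact hl.add_right hr
  e_f i j := by
    rw [tmul_commutator (k_tmul_e_comm D D' hC i j), D.e_f, D'.e_f]
    split_ifs with hij
    · subst hij
      rw [← TensorProduct.smul_tmul', TensorProduct.tmul_smul, ← smul_add, TensorProduct.sub_tmul,
        TensorProduct.tmul_sub, add_comm, sub_add_sub_cancel]
      rfl
    · rw [TensorProduct.zero_tmul, TensorProduct.tmul_zero, add_zero]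
  serre_e _ _ hij := tensor_serre_e D D' hC hij
  serre_f _ _ hij := tensor_serre_f D D' hC hij

end Tensor

/-- The family in the base field given by the counit. -/
def trivial : ChevalleyFamily a d 𝔽 where
  e _ := 0
  f _ := 0
  k _ := 1
  k_comm _ _ := Commute.one_left 1
  k_e _ _ := by simp only [QCommute, mul_zero, zero_mul, smul_zero]
  k_f _ _ := by simp only [QCommute, mul_zero, zero_mul, smul_zero]
  e_f _ _ := by simp
  serre_e _ _ _ := by simp [serre]
  serre_f _ _ _ := by simp [serre]

section Opposite

variable (D : ChevalleyFamily a d A)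

theorem opposite_serre_e (hC : IsSymmetrizableCartan a d) {i j : Fin n} (hij : i ≠ j) :
    serre (d i) (1 - a i j).toNat (op (-(D.kInv i * D.e i)))
      (op (-(D.kInv j * D.e j))) = 0 := by
  rw [← neg_mul, ← neg_mul]
  exact serre_op_eq_zero (serre_twist_eq_zero (hC.d_ne_zero i) (D.e_kInv i i).neg_right
    (hC.qPairing_comm i j ▸ (D.e_kInv j i).neg_right) (D.e_kInv i j).neg_right
    (D.kInv_comm i j).neg_left.neg_right (D.serre_e i j hij))

theorem opposite_serre_f (hC : IsSymmetrizableCartan a d) {i j : Fin n} (hij : i ≠ j) :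
    serre (d i) (1 - a i j).toNat (op (-(D.f i * D.k i))) (op (-(D.f j * D.k j))) = 0 := by
  have hkf (i j : Fin n) := (D.k_f i j).neg_left.op
  rw [← mul_neg, ← mul_neg, op_mul, op_mul]
  exact serre_twist_eq_zero (hC.d_ne_zero i) (hkf i i) (hC.qPairing_comm i j ▸ hkf j i) (hkf i j)
    (D.k_comm i j).units_val.neg_left.neg_right.op (serre_op_eq_zero (D.serre_f i j hij))

theorem f_k_mul_kInv_e (hC : IsSymmetrizableCartan a d) (i j : Fin n) :
    D.f j * D.k j * (D.kInv i * D.e i)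
      = D.kInv i * (D.f j * D.e i) * D.k j := by
  calc D.f j * D.k j * (D.kInv i * D.e i)
      = (D.f j * D.kInv i) * (D.k j * D.e i) := by
        rw [mul_assoc, ← mul_assoc (D.k j : A), (D.k_kInv_comm j i).eq, mul_assoc, mul_assoc]
    _ = D.kInv i * (D.f j * D.e i) * D.k j := by
        rw [D.f_kInv, D.k_e, smul_mul_smul_comm, hC.qPairing_comm j i,
          inv_mul_cancel₀ (qPairing_ne_zero i j), one_smul]
        simp only [mul_assoc]

/-- The family in the opposite algebra given by the formulas for the antipode. -/
def opposite (hC : IsSymmetrizableCartan a d) : ChevalleyFamily a d Aᵐᵒᵖ where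
  e i := op (-(D.kInv i * D.e i))
  f i := op (-(D.f i * D.k i))
  k i :=
    { val := op (D.kInv i)
      inv := op (D.k i : A)
      val_inv := by rw [← op_mul, Units.mul_inv, op_one]
      inv_val := by rw [← op_mul, Units.inv_mul, op_one] }
  k_comm i j := Units.ext (D.kInv_comm i j).op
  k_e i j := by
    have h := (QCommute.of_commute (D.kInv_comm j i)).mul_left (D.e_kInv i j)
    rw [one_mul] at h
    exact h.neg_left.op
  k_f i j := by
    have h := (D.f_kInv i j).mul_left (.of_commute (D.k_kInv_comm j i))
    rw [mul_one] at h
    exact h.neg_left.op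
  e_f i j := by
    rw [← op_mul, ← op_mul, ← op_sub, neg_mul_neg, neg_mul_neg, f_k_mul_kInv_e D hC,
      show D.kInv i * (D.f j * D.e i) * D.k j
          - D.kInv i * D.e i * (D.f j * D.k j)
        = -(D.kInv i * (D.e i * D.f j - D.f j * D.e i) * D.k j) by noncomm_ring, D.e_f]
    split_ifs with hij
    · subst hij
      change _ = (qq ^ d i - qq⁻¹ ^ d i)⁻¹ • (op (D.kInv i) - op (D.k i : A))
      rw [← op_sub, ← op_smul, mul_smul_comm, smul_mul_assoc, mul_sub, sub_mul, Units.inv_mul,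
        one_mul, Units.inv_mul_cancel_right, ← smul_neg, neg_sub]
    · rw [mul_zero, zero_mul, neg_zero, op_zero]
  serre_e _ _ hij := opposite_serre_e D hC hij
  serre_f _ _ hij := opposite_serre_f D hC hij

end Opposite

section UniversalProperty

/-- The Chevalley generators of `U_q(𝔤)`. -/
def generators (a : Fin n → Fin n → ℤ) (d : Fin n → ℕ) : ChevalleyFamily a d (U n a d) where
  e := Eg n a d
  f := Fg n a d
  k i :=
    { val := Kg n a d i
      inv := Kinvg n a d i
      val_inv := by simpa [Kg, Kinvg, ChariXi.mk] using RingQuot.mkAlgHom_rel 𝔽 (Rel.KKinv i)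
      inv_val := by simpa [Kg, Kinvg, ChariXi.mk] using RingQuot.mkAlgHom_rel 𝔽 (Rel.KinvK i) }
  k_comm i j := Units.ext (by simpa [Kg, ChariXi.mk] using RingQuot.mkAlgHom_rel 𝔽 (Rel.KK i j))
  k_e i j := by
    simpa [Kg, Eg, ChariXi.mk, QCommute, qPairing] using RingQuot.mkAlgHom_rel 𝔽 (Rel.KE i j)
  k_f i j := by
    have h := RingQuot.mkAlgHom_rel 𝔽 (Rel.KF (a := a) (d := d) i j)
    rwa [map_mul, map_smul, map_mul, zpow_neg] at h
  e_f i j := by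
    have h := RingQuot.mkAlgHom_rel 𝔽 (Rel.EF (a := a) (d := d) i j)
    rwa [map_sub, map_mul, map_mul, apply_ite (RingQuot.mkAlgHom 𝔽 (Rel n a d)), map_smul, map_sub,
      map_zero] at h
  serre_e i j hij := (map_serre (ChariXi.mk n a d) _ _ _ _).symm.trans
    ((RingQuot.mkAlgHom_rel 𝔽 (Rel.serreE i j hij)).trans (map_zero _))
  serre_f i j hij := (map_serre (ChariXi.mk n a d) _ _ _ _).symm.trans
    ((RingQuot.mkAlgHom_rel 𝔽 (Rel.serreF i j hij)).trans (map_zero _))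

variable (D : ChevalleyFamily a d A)

/-- The homomorphism from the free algebra that sends the generators to a given family. -/
def freeLift : FreeAlgebra 𝔽 (Gen n) →ₐ[𝔽] A :=
  FreeAlgebra.lift 𝔽 fun
    | Gen.E i => D.e i
    | Gen.F i => D.f i
    | Gen.K i => D.k i
    | Gen.Kinv i => D.kInv i

@[simp] theorem freeLift_E (i : Fin n) : D.freeLift (Fr.E n i) = D.e i := by
  rw [freeLift, Fr.E, FreeAlgebra.lift_ι_apply]

@[simp] theorem freeLift_F (i : Fin n) : D.freeLift (Fr.F n i) = D.f i := by
  rw [freeLift, Fr.F, FreeAlgebra.lift_ι_apply]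

@[simp] theorem freeLift_K (i : Fin n) : D.freeLift (Fr.K n i) = D.k i := by
  rw [freeLift, Fr.K, FreeAlgebra.lift_ι_apply]

@[simp] theorem freeLift_Kinv (i : Fin n) : D.freeLift (Fr.Kinv n i) = D.kInv i := by
  rw [freeLift, Fr.Kinv, FreeAlgebra.lift_ι_apply]

theorem freeLift_eq_of_rel ⦃x y : FreeAlgebra 𝔽 (Gen n)⦄ (h : Rel n a d x y) :
    D.freeLift x = D.freeLift y := by
  cases h with
  | KKinv i => simp
  | KinvK i => simp
  | KK i j => simpa using (D.k_comm i j).units_val.eq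
  | KE i j =>
    rw [map_mul, map_smul, map_mul, freeLift_K, freeLift_E]
    exact D.k_e i j
  | KF i j =>
    rw [map_mul, map_smul, map_mul, freeLift_K, freeLift_F, zpow_neg]
    exact D.k_f i j
  | EF i j =>
    rw [map_sub, map_mul, map_mul, apply_ite D.freeLift, map_smul, map_sub, map_zero]
    simpa only [freeLift_K, freeLift_E, freeLift_F, freeLift_Kinv] using D.e_f i j
  | serreE i j hij =>
    refine (map_serre D.freeLift _ _ _ _).trans ?_
    rw [freeLift_E, freeLift_E, D.serre_e i j hij, map_zero]
  | serreF i j hij =>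
    refine (map_serre D.freeLift _ _ _ _).trans ?_
    rw [freeLift_F, freeLift_F, D.serre_f i j hij, map_zero]

/-- The universal property of `U_q(𝔤)`: the homomorphism that sends the Chevalley generators to a
given family. -/
def lift : U n a d →ₐ[𝔽] A := RingQuot.liftAlgHom 𝔽 ⟨D.freeLift, D.freeLift_eq_of_rel⟩

theorem lift_mk (x : FreeAlgebra 𝔽 (Gen n)) : D.lift (ChariXi.mk n a d x) = D.freeLift x :=
  RingQuot.liftAlgHom_mkAlgHom_apply 𝔽 D.freeLift D.freeLift_eq_of_rel x

@[simp] theorem lift_E (i : Fin n) : D.lift (Eg n a d i) = D.e i :=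
  (D.lift_mk _).trans (D.freeLift_E i)

@[simp] theorem lift_F (i : Fin n) : D.lift (Fg n a d i) = D.f i :=
  (D.lift_mk _).trans (D.freeLift_F i)

@[simp] theorem lift_K (i : Fin n) : D.lift (Kg n a d i) = D.k i :=
  (D.lift_mk _).trans (D.freeLift_K i)

@[simp] theorem lift_Kinv (i : Fin n) : D.lift (Kinvg n a d i) = D.kInv i :=
  (D.lift_mk _).trans (D.freeLift_Kinv i)

end UniversalProperty

end ChevalleyFamily

@[simp] theorem Kg_mul_Kinvg (i : Fin n) : Kg n a d i * Kinvg n a d i = 1 :=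
  ((ChevalleyFamily.generators a d).k i).mul_inv

@[simp] theorem Kinvg_mul_Kg (i : Fin n) : Kinvg n a d i * Kg n a d i = 1 :=
  ((ChevalleyFamily.generators a d).k i).inv_mul

theorem U_algHom_ext {B : Type*} [Semiring B] [Algebra 𝔽 B] {φ ψ : U n a d →ₐ[𝔽] B}
    (hE : ∀ i, φ (Eg n a d i) = ψ (Eg n a d i)) (hF : ∀ i, φ (Fg n a d i) = ψ (Fg n a d i))
    (hK : ∀ i, φ (Kg n a d i) = ψ (Kg n a d i)) : φ = ψ := by
  refine RingQuot.ringQuot_ext' _ _ _ (FreeAlgebra.hom_ext (funext fun g => ?_))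
  cases g with
  | E i => exact hE i
  | F i => exact hF i
  | K i => exact hK i
  | Kinv i =>
    change φ (Kinvg n a d i) = ψ (Kinvg n a d i)
    refine left_inv_eq_right_inv (a := φ (Kg n a d i)) ?_ ?_
    · rw [← map_mul, Kinvg_mul_Kg, map_one]
    · rw [hK, ← map_mul, Kg_mul_Kinvg, map_one]

@[elab_as_elim]
theorem U_induction {P : U n a d → Prop} (E : ∀ i, P (Eg n a d i)) (F : ∀ i, P (Fg n a d i))
    (K : ∀ i, P (Kg n a d i)) (Kinv : ∀ i, P (Kinvg n a d i))
    (algebraMap : ∀ c, P (algebraMap 𝔽 _ c))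
    (add : ∀ x y, P x → P y → P (x + y)) (mul : ∀ x y, P x → P y → P (x * y)) (x : U n a d) :
    P x := by
  obtain ⟨y, rfl⟩ := RingQuot.mkAlgHom_surjective 𝔽 (Rel n a d) x
  induction y using FreeAlgebra.induction with
  | grade0 c => exact (RingQuot.mkAlgHom 𝔽 (Rel n a d)).commutes c ▸ algebraMap c
  | grade1 g =>
    cases g with
    | E i => exact E i
    | F i => exact F i
    | K i => exact K i
    | Kinv i => exact Kinv i
  | mul x y hx hy => exact map_mul (RingQuot.mkAlgHom 𝔽 (Rel n a d)) x y ▸ mul _ _ hx hy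
  | add x y hx hy => exact map_add (RingQuot.mkAlgHom 𝔽 (Rel n a d)) x y ▸ add _ _ hx hy

end ChevalleyFamily

section AntipodeLaws

variable {R H : Type*} [CommSemiring R] [Semiring H] [Algebra R H]
  {Δ : H →ₐ[R] H ⊗[R] H} {ε : H →ₐ[R] R} {S : H →ₗ[R] H}

theorem mul'_map_antipode_id_mul_tmul (hS : ∀ x y, S (x * y) = S y * S x) (t : H ⊗[R] H)
    (u v : H) :
    LinearMap.mul' R H (TensorProduct.map S .id (t * u ⊗ₜ v))
      = S u * LinearMap.mul' R H (TensorProduct.map S .id t) * v := by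
  induction t using TensorProduct.induction_on with
  | zero => simp
  | tmul p r => simp [hS, mul_assoc]
  | add p r hp hr => simp only [add_mul, map_add, hp, hr, mul_add]

theorem mul'_map_id_antipode_tmul_mul (hS : ∀ x y, S (x * y) = S y * S x) (t : H ⊗[R] H)
    (u v : H) :
    LinearMap.mul' R H (TensorProduct.map .id S (u ⊗ₜ v * t))
      = u * LinearMap.mul' R H (TensorProduct.map .id S t) * S v := by
  induction t using TensorProduct.induction_on with
  | zero => simp
  | tmul p r => simp [hS, mul_assoc]
  | add p r hp hr => simp only [add_mul, map_add, hp, hr, mul_add]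

theorem antipode_left_mul (hS : ∀ x y, S (x * y) = S y * S x) {x y : H}
    (hx : LinearMap.mul' R H (TensorProduct.map S .id (Δ x)) = ε x • (1 : H))
    (hy : LinearMap.mul' R H (TensorProduct.map S .id (Δ y)) = ε y • (1 : H)) :
    LinearMap.mul' R H (TensorProduct.map S .id (Δ (x * y))) = ε (x * y) • (1 : H) := by
  have hmul (w : H ⊗[R] H) : LinearMap.mul' R H (TensorProduct.map S .id (Δ x * w))
      = ε x • LinearMap.mul' R H (TensorProduct.map S .id w) := by
    induction w using TensorProduct.induction_on with
    | zero => simp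
    | tmul u v => simp [mul'_map_antipode_id_mul_tmul hS, hx]
    | add p r hp hr => simp only [mul_add, map_add, hp, hr, smul_add]
  rw [map_mul, hmul, hy, smul_smul, map_mul]

theorem antipode_right_mul (hS : ∀ x y, S (x * y) = S y * S x) {x y : H}
    (hx : LinearMap.mul' R H (TensorProduct.map .id S (Δ x)) = ε x • (1 : H))
    (hy : LinearMap.mul' R H (TensorProduct.map .id S (Δ y)) = ε y • (1 : H)) :
    LinearMap.mul' R H (TensorProduct.map .id S (Δ (x * y))) = ε (x * y) • (1 : H) := by
  have hmul (w : H ⊗[R] H) : LinearMap.mul' R H (TensorProduct.map .id S (w * Δ y))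
      = ε y • LinearMap.mul' R H (TensorProduct.map .id S w) := by
    induction w using TensorProduct.induction_on with
    | zero => simp
    | tmul u v => simp [mul'_map_id_antipode_tmul_mul hS, hy]
    | add p r hp hr => simp only [add_mul, map_add, hp, hr, smul_add]
  rw [map_mul, hmul, hx, smul_smul, map_mul, mul_comm]

end AntipodeLaws

section HopfStructure

variable {n : ℕ} {a : Fin n → Fin n → ℤ} {d : Fin n → ℕ}

open ChevalleyFamily

/-- The counit of `U_q(𝔤)`. -/
def counit : U n a d →ₐ[𝔽] 𝔽 := ChevalleyFamily.trivial.lift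

@[simp] theorem counit_E (i : Fin n) : counit (Eg n a d i) = 0 := ChevalleyFamily.trivial.lift_E i

@[simp] theorem counit_F (i : Fin n) : counit (Fg n a d i) = 0 := ChevalleyFamily.trivial.lift_F i

@[simp] theorem counit_K (i : Fin n) : counit (Kg n a d i) = 1 := ChevalleyFamily.trivial.lift_K i

@[simp] theorem counit_Kinv (i : Fin n) : counit (Kinvg n a d i) = 1 :=
  (ChevalleyFamily.trivial.lift_Kinv i).trans (congrArg Units.val inv_one)

variable (hC : IsSymmetrizableCartan a d)

/-- The comultiplication of `U_q(𝔤)`. -/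
def comul : U n a d →ₐ[𝔽] U n a d ⊗[𝔽] U n a d := (tensor (generators a d) (generators a d) hC).lift

@[simp] theorem comul_E (i : Fin n) :
    comul hC (Eg n a d i) = Eg n a d i ⊗ₜ 1 + Kg n a d i ⊗ₜ Eg n a d i :=
  lift_E _ i

@[simp] theorem comul_F (i : Fin n) :
    comul hC (Fg n a d i) = Fg n a d i ⊗ₜ Kinvg n a d i + 1 ⊗ₜ Fg n a d i :=
  lift_F _ i

@[simp] theorem comul_K (i : Fin n) : comul hC (Kg n a d i) = Kg n a d i ⊗ₜ Kg n a d i :=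
  lift_K _ i

@[simp] theorem comul_Kinv (i : Fin n) :
    comul hC (Kinvg n a d i) = Kinvg n a d i ⊗ₜ Kinvg n a d i :=
  lift_Kinv _ i

/-- The antipode of `U_q(𝔤)`, a homomorphism to the opposite algebra read as a linear map. -/
def antipode : U n a d →ₗ[𝔽] U n a d :=
  (opLinearEquiv 𝔽).symm.toLinearMap ∘ₗ (opposite (generators a d) hC).lift.toLinearMap

@[simp] theorem antipode_E (i : Fin n) :
    antipode hC (Eg n a d i) = -(Kinvg n a d i * Eg n a d i) :=
  congrArg unop (lift_E _ i)

@[simp] theorem antipode_F (i : Fin n) :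
    antipode hC (Fg n a d i) = -(Fg n a d i * Kg n a d i) :=
  congrArg unop (lift_F _ i)

@[simp] theorem antipode_K (i : Fin n) : antipode hC (Kg n a d i) = Kinvg n a d i :=
  congrArg unop (lift_K _ i)

@[simp] theorem antipode_Kinv (i : Fin n) : antipode hC (Kinvg n a d i) = Kg n a d i :=
  congrArg unop (lift_Kinv _ i)

@[simp] theorem antipode_one : antipode hC 1 = 1 := congrArg unop (map_one (lift _))

theorem antipode_mul (x y : U n a d) : antipode hC (x * y) = antipode hC y * antipode hC x :=
  congrArg unop (map_mul (lift _) x y)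

theorem comul_coassoc :
    ((Algebra.TensorProduct.assoc 𝔽 𝔽 𝔽 (U n a d) (U n a d) (U n a d)).toAlgHom.comp
        (Algebra.TensorProduct.map (comul hC) (.id 𝔽 _))).comp (comul hC)
      = (Algebra.TensorProduct.map (.id 𝔽 _) (comul hC)).comp (comul hC) := by
  refine U_algHom_ext (fun i => ?_) (fun i => ?_) (fun i => ?_)
  · simp [TensorProduct.add_tmul, TensorProduct.tmul_add, Algebra.TensorProduct.one_def, add_assoc]
  · simp [TensorProduct.add_tmul, TensorProduct.tmul_add, Algebra.TensorProduct.one_def, add_assoc]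
  · simp

theorem counit_comul_left :
    ((Algebra.TensorProduct.lid 𝔽 (U n a d)).toAlgHom.comp
        (Algebra.TensorProduct.map counit (.id 𝔽 _))).comp (comul hC) = .id 𝔽 _ :=
  U_algHom_ext (by simp) (by simp) (by simp)

theorem counit_comul_right :
    ((Algebra.TensorProduct.rid 𝔽 𝔽 (U n a d)).toAlgHom.comp
        (Algebra.TensorProduct.map (.id 𝔽 _) counit)).comp (comul hC) = .id 𝔽 _ :=
  U_algHom_ext (by simp) (by simp) (by simp)

theorem antipode_comul_left (x : U n a d) :
    LinearMap.mul' 𝔽 (U n a d) (TensorProduct.map (antipode hC) .id (comul hC x))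
      = counit x • (1 : U n a d) := by
  induction x using U_induction with
  | E i => simp
  | F i =>
    have h : -(Fg n a d i * Kg n a d i) * Kinvg n a d i + Fg n a d i = 0 :=
      (generators a d).neg_f_k_mul_kInv_add_f i
    simp [h]
  | K i => simp
  | Kinv i => simp
  | algebraMap c => simp [Algebra.algebraMap_eq_smul_one, Algebra.TensorProduct.one_def]
  | add x y hx hy => simp only [map_add, hx, hy, add_smul]
  | mul x y hx hy => exact antipode_left_mul (antipode_mul hC) hx hy

theorem antipode_comul_right (x : U n a d) :
    LinearMap.mul' 𝔽 (U n a d) (TensorProduct.map .id (antipode hC) (comul hC x))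
      = counit x • (1 : U n a d) := by
  induction x using U_induction with
  | E i =>
    have h : Eg n a d i + Kg n a d i * -(Kinvg n a d i * Eg n a d i) = 0 :=
      (generators a d).e_add_k_mul_neg_kInv_e i
    simp [h]
  | F i => simp
  | K i => simp
  | Kinv i => simp
  | algebraMap c => simp [Algebra.algebraMap_eq_smul_one, Algebra.TensorProduct.one_def]
  | add x y hx hy => simp only [map_add, hx, hy, add_smul]
  | mul x y hx hy => exact antipode_right_mul (antipode_mul hC) hx hy

end HopfStructure

end ChariXi

theorem chariXi_hopf_algebra_general (n : ℕ) (a : Fin n → Fin n → ℤ) (d : Fin n → ℕ)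
    (hC : IsSymmetrizableCartan a d) :
    ∃ (Δ : U n a d →ₐ[𝔽] (U n a d ⊗[𝔽] U n a d)) (ε : U n a d →ₐ[𝔽] 𝔽)
      (S : U n a d →ₗ[𝔽] U n a d),
      (∀ i, Δ (Eg n a d i)
          = Eg n a d i ⊗ₜ[𝔽] (1 : U n a d) + Kg n a d i ⊗ₜ[𝔽] Eg n a d i) ∧
      (∀ i, Δ (Fg n a d i)
          = Fg n a d i ⊗ₜ[𝔽] Kinvg n a d i + (1 : U n a d) ⊗ₜ[𝔽] Fg n a d i) ∧
      (∀ i, Δ (Kg n a d i) = Kg n a d i ⊗ₜ[𝔽] Kg n a d i) ∧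
      (∀ x, (TensorProduct.assoc 𝔽 (U n a d) (U n a d) (U n a d))
              ((TensorProduct.map Δ.toLinearMap LinearMap.id) (Δ x))
            = (TensorProduct.map LinearMap.id Δ.toLinearMap) (Δ x)) ∧
      (∀ x, (TensorProduct.lid 𝔽 (U n a d))
              ((TensorProduct.map ε.toLinearMap LinearMap.id) (Δ x)) = x) ∧
      (∀ x, (TensorProduct.rid 𝔽 (U n a d))
              ((TensorProduct.map LinearMap.id ε.toLinearMap) (Δ x)) = x) ∧
      (∀ x, (LinearMap.mul' 𝔽 (U n a d))
              ((TensorProduct.map S LinearMap.id) (Δ x)) = ε x • (1 : U n a d)) ∧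
      (∀ x, (LinearMap.mul' 𝔽 (U n a d))
              ((TensorProduct.map LinearMap.id S) (Δ x)) = ε x • (1 : U n a d)) :=
  ⟨comul hC, counit, antipode hC, comul_E hC, comul_F hC, comul_K hC,
    AlgHom.congr_fun (comul_coassoc hC), AlgHom.congr_fun (counit_comul_left hC),
    AlgHom.congr_fun (counit_comul_right hC), antipode_comul_left hC, antipode_comul_right hC⟩

theorem chariXi_hopf_algebra (n : ℕ) (a : Fin n → Fin n → ℤ) (d : Fin n → ℕ)
    (hC : IsCartan n a d) :
    ∃ (Δ : U n a d →ₐ[𝔽] (U n a d ⊗[𝔽] U n a d)) (ε : U n a d →ₐ[𝔽] 𝔽)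
      (S : U n a d →ₗ[𝔽] U n a d),
      -- values of the comultiplication on the generators
      (∀ i, Δ (Eg n a d i)
          = Eg n a d i ⊗ₜ[𝔽] (1 : U n a d) + Kg n a d i ⊗ₜ[𝔽] Eg n a d i) ∧
      (∀ i, Δ (Fg n a d i)
          = Fg n a d i ⊗ₜ[𝔽] Kinvg n a d i + (1 : U n a d) ⊗ₜ[𝔽] Fg n a d i) ∧
      (∀ i, Δ (Kg n a d i) = Kg n a d i ⊗ₜ[𝔽] Kg n a d i) ∧
      -- coassociativity
      (∀ x, (TensorProduct.assoc 𝔽 (U n a d) (U n a d) (U n a d))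
              ((TensorProduct.map Δ.toLinearMap LinearMap.id) (Δ x))
            = (TensorProduct.map LinearMap.id Δ.toLinearMap) (Δ x)) ∧
      -- counit laws
      (∀ x, (TensorProduct.lid 𝔽 (U n a d))
              ((TensorProduct.map ε.toLinearMap LinearMap.id) (Δ x)) = x) ∧
      (∀ x, (TensorProduct.rid 𝔽 (U n a d))
              ((TensorProduct.map LinearMap.id ε.toLinearMap) (Δ x)) = x) ∧
      -- antipode laws
      (∀ x, (LinearMap.mul' 𝔽 (U n a d))
              ((TensorProduct.map S LinearMap.id) (Δ x)) = ε x • (1 : U n a d)) ∧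
      (∀ x, (LinearMap.mul' 𝔽 (U n a d))
              ((TensorProduct.map LinearMap.id S) (Δ x)) = ε x • (1 : U n a d)) :=
  chariXi_hopf_algebra_general n a d hC.isSymmetrizableCartan
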